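/- Let p be a prime, q = p^m, r ≥ 4 an integer, and a ∈ F_{q^r} with a ≠ 0. Then the homogeneous polynomial R(X_1,…,X_r) = −∏_{i=1}^r X_i + Σ_{i=1}^r a^{q^{i-1}} X_i^r is irreducible in F̄_q[X_1,…,X_r], where F̄_q is an algebraic closure of F_q containing F_{q^r}. -/

import Mathlib

open MvPolynomial

/-!
Write `n = p ^ k * s` with `p` the characteristic exponent of the algebraically closed field `K` and
`s` nonzero in `K`. Taking `p ^ k`-th roots `t i` of the coefficients, the form becomes
`Q ^ p ^ k - X 0 * ∏ i ≠ 0, X i` with `Q = ∑ t i * X i ^ s`. Modulo `X 0` this is a power of a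
diagonal form of degree `s` in at least three variables, which is irreducible and does not divide
`∏ i ≠ 0, X i`; a Schönemann-type criterion modulo the prime `X 0` therefore applies: if both
factors of the form were multiples of `Q` modulo `X 0`, their product would lie in `(X 0, Q) ^ 2`,
and `∏ i ≠ 0, X i` in `(X 0, Q)`. So one factor is a unit modulo `X 0`; it has a nonzero constant
term, and a factor of a homogeneous polynomial with nonzero constant term is constant.

Diagonal forms are treated in the same way: in three variables the criterion applies modulo a linear
factor of `c₀ * X 0 ^ s + c₁ * X 1 ^ s`, and more variables are removed by setting them to zero.
-/

section Criterion

lemma isUnit_map_or_isUnit_map_of_mul_eq_pow_add_mul {A B F : Type*} [CommRing A]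
    [IsDomain A] [CommRing B] [IsDomain B] [FunLike F A B] [RingHomClass F A B] {φ : F}
    (hφ : Function.Surjective φ) {π Q g a b : A} {m : ℕ} (hπ : π ≠ 0)
    (hker : RingHom.ker φ = Ideal.span {π}) (hQ : Prime (φ Q)) (hg : ¬ φ Q ∣ φ g)
    (hab : a * b = Q ^ m + π * g) :
    IsUnit (φ a) ∨ IsUnit (φ b) := by
  have map_eq_zero_iff (x : A) : φ x = 0 ↔ π ∣ x := by
    rw [← RingHom.mem_ker, hker, Ideal.mem_span_singleton]
  have map_pi : φ π = 0 := (map_eq_zero_iff π).2 dvd_rfl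
  have map_mul_eq : φ a * φ b = φ Q ^ m := by
    rw [← map_mul, hab, map_add, map_mul, map_pi, zero_mul, add_zero, map_pow]
  have dvd_of_not_isUnit {x : B} (hx : x ∣ φ Q ^ m) (hxu : ¬ IsUnit x) : φ Q ∣ x := by
    obtain ⟨i, -, hi⟩ := (dvd_prime_pow hQ m).1 hx
    refine (dvd_pow_self _ ?_).trans hi.symm.dvd
    rintro rfl
    exact hxu (hi.symm.isUnit (by simp))
  have exists_lift {x : A} (hx : φ Q ∣ φ x) : ∃ y z, x = Q * y + π * z := by
    obtain ⟨y', hy⟩ := hx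
    obtain ⟨y, rfl⟩ := hφ y'
    obtain ⟨z, hz⟩ := (map_eq_zero_iff (x - Q * y)).1 (by rw [map_sub, map_mul, hy, sub_self])
    exact ⟨y, z, by rw [← hz]; ring⟩
  by_contra! ⟨ha, hb⟩
  have hQa := dvd_of_not_isUnit (Dvd.intro _ map_mul_eq) ha
  have hQb := dvd_of_not_isUnit (Dvd.intro_left _ map_mul_eq) hb
  obtain ⟨k, rfl⟩ : ∃ k, m = 2 + k := by
    refine Nat.exists_eq_add_of_le ((pow_dvd_pow_iff hQ.ne_zero hQ.not_isUnit).1 ?_)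
    rw [← map_mul_eq, sq]
    exact mul_dvd_mul hQa hQb
  obtain ⟨a₀, a₁, rfl⟩ := exists_lift hQa
  obtain ⟨b₀, b₁, rfl⟩ := exists_lift hQb
  obtain ⟨h, hh⟩ : π ∣ a₀ * b₀ - Q ^ k := by
    rw [← map_eq_zero_iff]
    refine (mul_eq_zero.1 ?_).resolve_left (pow_ne_zero 2 hQ.ne_zero)
    simp only [map_add, map_mul, map_pi] at map_mul_eq
    simp only [map_sub, map_mul, map_pow]
    linear_combination map_mul_eq
  have hg_eq : g = Q * (Q * h + a₀ * b₁ + a₁ * b₀) + π * (a₁ * b₁) :=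
    mul_left_cancel₀ hπ (by linear_combination Q ^ 2 * hh - hab)
  refine hg ⟨φ (Q * h + a₀ * b₁ + a₁ * b₀), ?_⟩
  rw [hg_eq, map_add, map_mul, map_mul, map_pi, zero_mul, add_zero]

lemma totalDegree_eq_zero_of_isHomogeneous_mul {σ R : Type*} [CommRing R] [IsDomain R]
    {a b : MvPolynomial σ R} {d : ℕ} (hab : (a * b).IsHomogeneous d) (h0 : a * b ≠ 0)
    (ha : constantCoeff a ≠ 0) : a.totalDegree = 0 := by
  have hb : b ≠ 0 := right_ne_zero_of_mul h0
  have order_a : (a : MvPowerSeries σ R).order = 0 := by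
    have := MvPowerSeries.order_le (f := (a : MvPowerSeries σ R)) (d := 0)
      (by rwa [coeff_coe, ← constantCoeff_eq])
    simpa using this
  have le_order_b : (d : ℕ∞) ≤ (b : MvPowerSeries σ R).order := by
    rw [← zero_add (b : MvPowerSeries σ R).order, ← order_a, ← MvPowerSeries.order_mul, ← coe_mul]
    refine MvPowerSeries.le_order fun m hm => ?_
    rw [coeff_coe]
    exact hab.coeff_eq_zero (by exact_mod_cast hm.ne)
  have le_totalDegree_b : d ≤ b.totalDegree := by
    obtain ⟨m, hm⟩ := support_nonempty.2 hb
    have h := le_order_b.trans (MvPowerSeries.order_le (d := m)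
      (by rwa [coeff_coe, ← mem_support_iff]))
    exact (by exact_mod_cast h : d ≤ m.degree).trans (le_totalDegree hm)
  have hdeg := hab.totalDegree h0
  rw [totalDegree_mul_of_isDomain (left_ne_zero_of_mul h0) hb] at hdeg
  omega

variable {σ K B F : Type*} [Field K] [CommRing B] [FunLike F (MvPolynomial σ K) B]
  [RingHomClass F (MvPolynomial σ K) B] {φ : F}

lemma isUnit_of_isUnit_map_of_isHomogeneous_mul
    (hφ : Function.Surjective φ) (hker : RingHom.ker φ ≤ RingHom.ker constantCoeff)
    {a b : MvPolynomial σ K} {d : ℕ} (hab : (a * b).IsHomogeneous d) (h0 : a * b ≠ 0)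
    (ha : IsUnit (φ a)) : IsUnit a := by
  obtain ⟨v, hv⟩ := ha.exists_right_inv
  obtain ⟨u, rfl⟩ := hφ v
  have hau : constantCoeff a * constantCoeff u = 1 := by
    have : a * u - 1 ∈ RingHom.ker φ := by simp [RingHom.mem_ker, hv]
    simpa [RingHom.mem_ker, sub_eq_zero] using hker this
  have ha0 : constantCoeff a ≠ 0 := left_ne_zero_of_mul_eq_one hau
  exact isUnit_iff_totalDegree_of_isReduced.2
    ⟨isUnit_iff_ne_zero.2 ha0, totalDegree_eq_zero_of_isHomogeneous_mul hab h0 ha0⟩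

lemma irreducible_of_isHomogeneous_of_isUnit_map_or
    (hφ : Function.Surjective φ) (hker : RingHom.ker φ ≤ RingHom.ker constantCoeff)
    {f : MvPolynomial σ K} {d : ℕ} (hf : f.IsHomogeneous d) (hf0 : φ f ≠ 0)
    (hfu : ¬ IsUnit (φ f)) (h : ∀ a b, a * b = f → IsUnit (φ a) ∨ IsUnit (φ b)) :
    Irreducible f := by
  refine ⟨fun hu => hfu (hu.map φ), fun a b hab => ?_⟩
  have h0 : a * b ≠ 0 := by
    rw [← hab]
    exact ne_zero_of_map hf0
  rw [hab] at hf
  refine (h a b hab.symm).imp (isUnit_of_isUnit_map_of_isHomogeneous_mul hφ hker hf h0) fun hb => ?_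
  rw [mul_comm] at hf h0
  exact isUnit_of_isUnit_map_of_isHomogeneous_mul hφ hker hf h0 hb

lemma irreducible_of_isHomogeneous_of_irreducible_map
    (hφ : Function.Surjective φ) (hker : RingHom.ker φ ≤ RingHom.ker constantCoeff)
    {f : MvPolynomial σ K} {d : ℕ} (hf : f.IsHomogeneous d) (hφf : Irreducible (φ f)) :
    Irreducible f :=
  irreducible_of_isHomogeneous_of_isUnit_map_or hφ hker hf hφf.ne_zero hφf.not_isUnit
    fun a b hab => hφf.isUnit_or_isUnit (by rw [← hab, map_mul])

lemma irreducible_pow_add_mul_of_isHomogeneous [IsDomain B]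
    (hφ : Function.Surjective φ) {π Q g : MvPolynomial σ K} {m d : ℕ} (hm : m ≠ 0) (hπ : π ≠ 0)
    (hπ0 : constantCoeff π = 0) (hker : RingHom.ker φ = Ideal.span {π})
    (hQ : Prime (φ Q)) (hg : ¬ φ Q ∣ φ g) (hf : (Q ^ m + π * g).IsHomogeneous d) :
    Irreducible (Q ^ m + π * g) := by
  have map_pi : φ π = 0 := by
    rw [← RingHom.mem_ker, hker]
    exact Ideal.mem_span_singleton_self π
  have map_eq : φ (Q ^ m + π * g) = φ Q ^ m := by simp [map_pi]
  refine irreducible_of_isHomogeneous_of_isUnit_map_or hφ ?_ hf ?_ ?_ fun a b hab =>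
    isUnit_map_or_isUnit_map_of_mul_eq_pow_add_mul hφ hπ hker hQ hg hab
  · rw [hker, Ideal.span_singleton_le_iff_mem, RingHom.mem_ker, hπ0]
  · rw [map_eq]
    exact pow_ne_zero m hQ.ne_zero
  · rw [map_eq, isUnit_pow_iff hm]
    exact hQ.not_isUnit

end Criterion

section SubstFirst

variable {R : Type*} [CommRing R] {n : ℕ}

/-- The specialisation `X 0 ↦ ℓ`, `X i.succ ↦ X i`, which restricts polynomials in `n + 1` variables
to the graph of `ℓ`; for `ℓ = 0` it is the restriction to the hyperplane `X 0 = 0`. -/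
noncomputable def substFirst (ℓ : MvPolynomial (Fin n) R) :
    MvPolynomial (Fin (n + 1)) R →ₐ[R] MvPolynomial (Fin n) R :=
  aeval (Fin.cons ℓ X)

@[simp]
lemma substFirst_X_zero (ℓ : MvPolynomial (Fin n) R) : substFirst ℓ (X 0) = ℓ := by
  simp [substFirst]

@[simp]
lemma substFirst_X_succ (ℓ : MvPolynomial (Fin n) R) (i : Fin n) :
    substFirst ℓ (X i.succ) = X i := by
  simp [substFirst]

lemma substFirst_rename_succ (ℓ f : MvPolynomial (Fin n) R) :
    substFirst ℓ (rename Fin.succ f) = f := by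
  have : (substFirst ℓ).comp (rename Fin.succ) = AlgHom.id R _ := by ext i; simp
  exact DFunLike.congr_fun this f

lemma substFirst_surjective (ℓ : MvPolynomial (Fin n) R) : Function.Surjective (substFirst ℓ) :=
  fun f => ⟨rename Fin.succ f, substFirst_rename_succ ℓ f⟩

lemma ker_substFirst (ℓ : MvPolynomial (Fin n) R) :
    RingHom.ker (substFirst ℓ) = Ideal.span {X 0 - rename Fin.succ ℓ} := by
  set I : Ideal (MvPolynomial (Fin (n + 1)) R) := Ideal.span {X 0 - rename Fin.succ ℓ} with hI
  refine le_antisymm (fun f hf => ?_) ?_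
  · have mk_comp : (Ideal.Quotient.mkₐ R I).comp ((rename Fin.succ).comp (substFirst ℓ)) =
        Ideal.Quotient.mkₐ R I := by
      ext i
      cases i using Fin.cases with
      | zero =>
        simpa using (Ideal.Quotient.eq.2 (Ideal.mem_span_singleton_self _)).symm
      | succ i => simp
    have hf0 : substFirst ℓ f = 0 := hf
    have := DFunLike.congr_fun mk_comp f
    rw [AlgHom.comp_apply, AlgHom.comp_apply, hf0, map_zero, map_zero] at this
    exact Ideal.Quotient.eq_zero_iff_mem.1 this.symm
  · simp [hI, RingHom.mem_ker, substFirst_rename_succ]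

lemma X_zero_sub_rename_succ_ne_zero [Nontrivial R] (ℓ : MvPolynomial (Fin n) R) :
    X 0 - rename Fin.succ ℓ ≠ 0 :=
  ne_zero_of_map (f := substFirst (ℓ + 1)) (by simp [substFirst_rename_succ])

end SubstFirst

section DiagonalForm

/-- The diagonal form `∑ i, c i * X i ^ s`. -/
noncomputable def diagonalForm {σ R : Type*} [Fintype σ] [CommSemiring R] (c : σ → R) (s : ℕ) :
    MvPolynomial σ R :=
  ∑ i, C (c i) * X i ^ s

lemma isHomogeneous_diagonalForm {σ R : Type*} [Fintype σ] [CommSemiring R] (c : σ → R) (s : ℕ) :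
    (diagonalForm c s).IsHomogeneous s :=
  .sum _ _ _ fun i _ => isHomogeneous_C_mul_X_pow (c i) i s

lemma eval_single_diagonalForm {σ R : Type*} [Fintype σ] [DecidableEq σ] [CommSemiring R]
    (c : σ → R) {s : ℕ} (hs : s ≠ 0) (j : σ) : eval (Pi.single j 1) (diagonalForm c s) = c j := by
  simp [diagonalForm, Pi.single_apply, ite_pow, hs]

lemma diagonalForm_pow_expChar_pow {σ R : Type*} [Fintype σ] [CommSemiring R] (p : ℕ) [ExpChar R p]
    (c : σ → R) (s k : ℕ) :
    diagonalForm c s ^ p ^ k = diagonalForm (fun i => c i ^ p ^ k) (p ^ k * s) := by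
  simp only [diagonalForm, sum_pow_char_pow, mul_pow, C_pow, ← pow_mul, mul_comm s]

lemma substFirst_zero_diagonalForm {R : Type*} [CommRing R] {n : ℕ} (c : Fin (n + 1) → R) {s : ℕ}
    (hs : s ≠ 0) : substFirst 0 (diagonalForm c s) = diagonalForm (fun i => c i.succ) s := by
  simp [diagonalForm, Fin.sum_univ_succ, hs]

variable {K : Type*} [Field K]

lemma not_dvd_prod_X_of_irreducible_diagonalForm {σ : Type*} [Fintype σ] [Nontrivial σ] {c : σ → K}
    (hc : ∀ i, c i ≠ 0) {s : ℕ} (hs : s ≠ 0) (h : Irreducible (diagonalForm c s)) :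
    ¬ diagonalForm c s ∣ ∏ i, X i := by
  classical
  intro hdvd
  obtain ⟨i, -, hi⟩ := (h.prime.dvd_finsetProd_iff _).1 hdvd
  obtain ⟨g, hg⟩ := (h.dvd_symm X_prime.irreducible hi : X i ∣ diagonalForm c s)
  obtain ⟨j, hij⟩ := exists_ne i
  apply hc j
  rw [← eval_single_diagonalForm c hs j, hg]
  simp [hij.symm]

lemma irreducible_C_mul_X_pow_sub_X_pow_add_X_pow {c ζ t : K} (hc : c ≠ 0) (hζ : ζ ≠ 0) (ht : t ≠ 0)
    {s : ℕ} (hs : (s : K) ≠ 0) :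
    Irreducible (C c * (X 0 ^ s - (C ζ * X 1) ^ s) + (C t * X 2) ^ s : MvPolynomial (Fin 3) K) := by
  have hs0 : s ≠ 0 := by rintro rfl; simp at hs
  let ℓ : MvPolynomial (Fin 2) K := C ζ * X 0
  set π : MvPolynomial (Fin 3) K := X 0 - rename Fin.succ ℓ
  let g : MvPolynomial (Fin 3) K :=
    C c * ∑ i ∈ Finset.range s, X 0 ^ i * (C ζ * X 1) ^ (s - 1 - i)
  have hπ : π = X 0 - C ζ * X 1 := by simp [π, ℓ]
  have map_Q : substFirst ℓ (C t * X 2) = C t * X 1 := by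
    have map_X_two : substFirst ℓ (X 2) = X 1 := substFirst_X_succ ℓ 1
    rw [map_mul, algHom_C, algebraMap_eq, map_X_two]
  have map_g : substFirst ℓ g = C c * ((s : MvPolynomial (Fin 2) K) * ℓ ^ (s - 1)) := by
    have map_X_one : substFirst ℓ (X 1) = X 0 := substFirst_X_succ ℓ 0
    simp only [g, map_mul, map_sum, map_pow, algHom_C, algebraMap_eq, substFirst_X_zero,
      map_X_one, ← geom_sum₂_self, ℓ]
  have prime_Q : Prime (C t * X 1 : MvPolynomial (Fin 2) K) :=
    ((associated_isUnit_mul_left_iff ((isUnit_iff_ne_zero.2 ht).map C)).2 (.refl _)).symm.prime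
      X_prime
  have not_dvd : ¬ C t * X 1 ∣ C c * ((s : MvPolynomial (Fin 2) K) * ℓ ^ (s - 1)) := by
    rintro ⟨h, hh⟩
    have := congrArg (eval ![1, 0]) hh
    simp [ℓ, hs, hζ, hc] at this
  have eq_add : C c * (X 0 ^ s - (C ζ * X 1) ^ s) + (C t * X 2) ^ s = (C t * X 2) ^ s + π * g := by
    rw [← (Commute.all (X 0) (C ζ * X 1)).mul_geom_sum₂ s, hπ]
    ring
  have homogeneous : (C c * (X 0 ^ s - (C ζ * X 1) ^ s) + (C t * X 2) ^ s :
      MvPolynomial (Fin 3) K).IsHomogeneous s := by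
    have hpow (x : K) (i : Fin 3) : ((C x * X i) ^ s).IsHomogeneous s := by
      simpa using (isHomogeneous_C_mul_X x i).pow s
    exact (((isHomogeneous_X_pow 0 s).sub (hpow ζ 1)).C_mul c).add (hpow t 2)
  rw [eq_add] at homogeneous ⊢
  exact irreducible_pow_add_mul_of_isHomogeneous (substFirst_surjective ℓ) hs0
    (X_zero_sub_rename_succ_ne_zero ℓ) (by simp [hπ]) (ker_substFirst ℓ)
    (map_Q ▸ prime_Q) (by rwa [map_Q, map_g]) homogeneous

variable [IsAlgClosed K]

lemma exists_ne_zero_pow_eq {x : K} (hx : x ≠ 0) {n : ℕ} (hn : n ≠ 0) : ∃ y ≠ 0, y ^ n = x := by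
  obtain ⟨y, rfl⟩ := IsAlgClosed.exists_pow_nat_eq x (Nat.pos_of_ne_zero hn)
  exact ⟨y, fun h => hx (by rw [h, zero_pow hn]), rfl⟩

lemma irreducible_diagonalForm_fin_three {c : Fin 3 → K} (hc : ∀ i, c i ≠ 0) {s : ℕ}
    (hs : (s : K) ≠ 0) : Irreducible (diagonalForm c s) := by
  have hs0 : s ≠ 0 := by rintro rfl; simp at hs
  obtain ⟨ζ, hζ0, hζ⟩ := exists_ne_zero_pow_eq (div_ne_zero (neg_ne_zero.2 (hc 1)) (hc 0)) hs0
  obtain ⟨t, ht0, ht⟩ := exists_ne_zero_pow_eq (hc 2) hs0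
  convert irreducible_C_mul_X_pow_sub_X_pow_add_X_pow (hc 0) hζ0 ht0 hs using 1
  have hcζ : c 0 * ζ ^ s = -c 1 := by rw [hζ, mul_div_cancel₀ _ (hc 0)]
  rw [mul_pow, mul_pow, ← C_pow, ← C_pow, ht, mul_sub, ← mul_assoc, ← C_mul, hcζ, C_neg,
    diagonalForm, Fin.sum_univ_three]
  ring

lemma irreducible_diagonalForm {n : ℕ} (hn : 3 ≤ n) {c : Fin n → K} (hc : ∀ i, c i ≠ 0) {s : ℕ}
    (hs : (s : K) ≠ 0) : Irreducible (diagonalForm c s) := by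
  have hs0 : s ≠ 0 := by rintro rfl; simp at hs
  induction n, hn using Nat.le_induction with
  | base => exact irreducible_diagonalForm_fin_three hc hs
  | succ n _ ih =>
    refine irreducible_of_isHomogeneous_of_irreducible_map (substFirst_surjective 0) ?_
      (isHomogeneous_diagonalForm c s) ?_
    · simp [ker_substFirst, RingHom.mem_ker]
    · rw [substFirst_zero_diagonalForm c hs0]
      exact ih fun i => hc i.succ

end DiagonalForm

lemma exists_eq_expChar_pow_mul (K : Type*) [Field K] (p : ℕ) [ExpChar K p] {n : ℕ} (hn : n ≠ 0) :
    ∃ k s : ℕ, n = p ^ k * s ∧ (s : K) ≠ 0 := by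
  cases ‹ExpChar K p› with
  | zero => exact ⟨0, n, by simp, by exact_mod_cast hn⟩
  | prime hp =>
    obtain ⟨k, s, hs, rfl⟩ := Nat.exists_eq_pow_mul_and_not_dvd hn p hp.ne_one
    exact ⟨k, s, rfl, by rwa [Ne, CharP.cast_eq_zero_iff K p]⟩

lemma irreducible_neg_prod_X_add_diagonalForm {K : Type*} [Field K] [IsAlgClosed K] {r : ℕ}
    (hr : 4 ≤ r) {c : Fin r → K} (hc : ∀ i, c i ≠ 0) :
    Irreducible (-(∏ i, X i) + diagonalForm c r) := by
  obtain ⟨n, rfl⟩ : ∃ n, r = n + 1 := ⟨r - 1, by omega⟩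
  obtain ⟨p, _⟩ := ExpChar.exists K
  obtain ⟨k, s, hks, hs⟩ := exists_eq_expChar_pow_mul K p n.succ_ne_zero
  have hs0 : s ≠ 0 := by rintro rfl; simp at hs
  have hpk : p ^ k ≠ 0 := pow_ne_zero k (expChar_ne_zero K p)
  choose t ht0 ht using fun i => exists_ne_zero_pow_eq (hc i) hpk
  have eq_add : -(∏ i, X i) + diagonalForm c (n + 1) =
      diagonalForm t s ^ p ^ k + X 0 * -∏ i : Fin n, X i.succ := by
    rw [diagonalForm_pow_expChar_pow, ← hks, Fin.prod_univ_succ]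
    simp only [ht]
    ring
  have : Nontrivial (Fin n) := Fin.nontrivial_iff_two_le.2 (by omega)
  have map_Q := substFirst_zero_diagonalForm t hs0
  have irreducible_tail : Irreducible (diagonalForm (fun i : Fin n => t i.succ) s) :=
    irreducible_diagonalForm (by omega) (fun i => ht0 i.succ) hs
  have not_dvd : ¬ substFirst 0 (diagonalForm t s) ∣ substFirst 0 (-∏ i : Fin n, X i.succ) := by
    rw [map_Q, map_neg, dvd_neg, map_prod]
    simp only [substFirst_X_succ]
    exact not_dvd_prod_X_of_irreducible_diagonalForm (c := fun i : Fin n => t i.succ)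
      (fun i => ht0 i.succ) hs0 irreducible_tail
  have homogeneous : (-(∏ i, X i) + diagonalForm c (n + 1)).IsHomogeneous (n + 1) := by
    refine .add (.neg ?_) (isHomogeneous_diagonalForm c (n + 1))
    simpa using IsHomogeneous.prod Finset.univ X 1 fun i _ => isHomogeneous_X K (i : Fin (n + 1))
  rw [eq_add] at homogeneous ⊢
  exact irreducible_pow_add_mul_of_isHomogeneous (substFirst_surjective 0) hpk (X_ne_zero 0)
    (constantCoeff_X K 0) (by simpa using ker_substFirst 0) (map_Q ▸ irreducible_tail.prime)
    not_dvd homogeneous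

lemma isLocalHom_mvPolynomial_map {σ R S : Type*} [CommRing R] [CommRing S] {φ : R →+* S}
    [IsLocalHom φ] (hφ : Function.Injective φ) : IsLocalHom (map (σ := σ) φ) where
  map_nonunit f hf := by
    simpa only [isUnit_iff, coeff_map, isUnit_map_iff, IsNilpotent.map_iff hφ] using hf

theorem stmt_7_general {K : Type*} [Field K] {r : ℕ} (hr : 4 ≤ r) {c : Fin r → K}
    (hc : ∀ i, c i ≠ 0) :
    Irreducible (-(∏ i, X i) + ∑ i, C (c i) * X i ^ r : MvPolynomial (Fin r) K) := by
  let φ := algebraMap K (AlgebraicClosure K)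
  have : IsLocalHom (map (σ := Fin r) φ) := isLocalHom_mvPolynomial_map φ.injective
  refine Irreducible.of_map (f := map (σ := Fin r) φ) ?_
  have hφc (i) : φ (c i) ≠ 0 := (map_ne_zero φ).2 (hc i)
  simpa [diagonalForm] using irreducible_neg_prod_X_add_diagonalForm hr hφc

/-- For `r ≥ 4` and `a ∈ F_{q^r}` nonzero, the homogeneous polynomial
`R = -X_1⋯X_r + a·X_1^r + a^q·X_2^r + … + a^{q^{r-1}}·X_r^r`
is irreducible over an algebraic closure of `F_q`. -/
theorem stmt_7 (p m q r : ℕ) (hp : p.Prime) (hm : 0 < m) (hq : q = p ^ m)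
    (hr : 4 ≤ r)
    (K : Type) [Field K] [IsAlgClosed K] [CharP K p]
    (a : K) (hmem : a ^ q ^ r = a) (ha : a ≠ 0) :
    Irreducible
      (-(∏ i : Fin r, X i) +
        ∑ i : Fin r, C (a ^ q ^ (i : ℕ)) * X i ^ r : MvPolynomial (Fin r) K) :=
  stmt_7_general hr fun i => pow_ne_zero (q ^ (i : ℕ)) ha
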